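/- arXiv:math/0311510 — 4 statements merged into one kernel-verified Lean document; each statement's English description precedes it below -/
import Mathlib

section
/- For natural numbers m ≥ 1 and N ≥ 1, if R(m,N) denotes the number of orbits of the simultaneous cyclic rotation action ((x,y,z),(a,b,c)) ↦ ((z,x,y),(c,a,b)) on the set of pairs of ordered triples of positive integers with x + y + z = m and a + b + c = N, then 3·R(m,N) = (m-1)(m-2)(N-1)(N-2)/4 + 2·[3 ∣ m and 3 ∣ N], where the bracket is 1 if both divisibilities hold and 0 otherwise. -/
/-!
Burnside's count for a map `f` with `f ∘ f ∘ f = id`: give each point the weight `3` if it is fixed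
by `f` and `1` otherwise. Every orbit is either a fixed point or consists of three distinct
non-fixed points, so it has total weight `3`; summing over orbits,
`3 * #orbits = #points + 2 * #fixed points` (`three_mul_card_quotient`).

For pairs of triples, the number of points is the product of two numbers of compositions into three
positive parts, each given by `2 * #triples = (N - 1) * (N - 2)` (`two_mul_card_triple`). A fixed
pair consists of two constant triples, so it exists, and is then unique, exactly when `3 ∣ m` and
`3 ∣ N` (`card_fixed`).
-/

/-- `IsTriple N t` says that `t = (a,b,c)` is an ordered triple of positive
integers with `a + b + c = N`. -/
def IsTriple (N : ℕ) (t : ℕ × ℕ × ℕ) : Prop :=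
  0 < t.1 ∧ 0 < t.2.1 ∧ 0 < t.2.2 ∧ t.1 + t.2.1 + t.2.2 = N

/-- Cyclic rotation on ordered triples: `(a,b,c) ↦ (c,a,b)`. -/
def rot (t : ℕ × ℕ × ℕ) : ℕ × ℕ × ℕ := (t.2.2, t.1, t.2.1)

/-- Simultaneous cyclic rotation on a pair of triples:
`((x,y,z),(a,b,c)) ↦ ((z,x,y),(c,a,b))`. -/
def rot2 (p : (ℕ × ℕ × ℕ) × (ℕ × ℕ × ℕ)) : (ℕ × ℕ × ℕ) × (ℕ × ℕ × ℕ) :=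
  (rot p.1, rot p.2)

lemma rot2_rot2_rot2 (p : (ℕ × ℕ × ℕ) × (ℕ × ℕ × ℕ)) : rot2 (rot2 (rot2 p)) = p := rfl

/-- The setoid whose classes are the orbits of the simultaneous cyclic rotation
action of the cyclic group of order `3` on the set of pairs of triples
satisfying `P`. -/
def pairRotSetoid (P : (ℕ × ℕ × ℕ) × (ℕ × ℕ × ℕ) → Prop) :
    Setoid {p : (ℕ × ℕ × ℕ) × (ℕ × ℕ × ℕ) // P p} where
  r x y := y.1 = x.1 ∨ y.1 = rot2 x.1 ∨ y.1 = rot2 (rot2 x.1)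
  iseqv := by
    constructor
    · intro x; exact Or.inl rfl
    · rintro x y (h | h | h)
      · exact Or.inl h.symm
      · right; right; rw [h, rot2_rot2_rot2]
      · right; left; rw [h, rot2_rot2_rot2]
    · rintro x y z (h1 | h1 | h1) (h2 | h2 | h2) <;>
        rw [h2, h1] <;> simp [rot2_rot2_rot2]

/-- Burnside's formula for a cyclic group of order three, presented by a map `f` of order dividing
three and its orbit relation. -/
lemma three_mul_card_quotient {α : Type*} [Finite α] (s : Setoid α) (f : α → α)
    (hf : ∀ x, f (f (f x)) = x)
    (hs : ∀ x y, s x y ↔ y = x ∨ y = f x ∨ y = f (f x)) :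
    3 * Nat.card (Quotient s) = Nat.card α + 2 * Nat.card {x // f x = x} := by
  classical
  have := Fintype.ofFinite α
  have := Fintype.ofFinite (Quotient s)
  rw [Nat.card_eq_fintype_card, Nat.card_eq_fintype_card, Nat.card_eq_fintype_card,
    Fintype.card_subtype]
  have weight : ∀ q : Quotient s,
      ∑ x with Quotient.mk s x = q, (1 + 2 * if f x = x then 1 else 0) = 3 := by
    intro q
    induction q using Quotient.inductionOn with
    | h x =>
      have fiber : (Finset.univ.filter fun y => Quotient.mk s y = Quotient.mk s x)
          = {x, f x, f (f x)} := by
        ext y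
        simp only [Finset.mem_filter, Finset.mem_univ, true_and, Finset.mem_insert,
          Finset.mem_singleton]
        rw [eq_comm, Quotient.eq, hs]
      rw [fiber]
      by_cases h : f x = x
      · simp [h]
      · have h1 : f (f x) ≠ f x := fun e => h (by
          have := congrArg f (congrArg f e)
          rwa [hf, hf] at this)
        have h2 : x ≠ f (f x) := fun e => h (by
          have := congrArg f e
          rwa [hf] at this)
        rw [Finset.sum_insert (by simp [h2, Ne.symm h]), Finset.sum_insert (by simp [h1.symm]),
          Finset.sum_singleton, hf]
        simp [h, h1, h2]
  calc 3 * Fintype.card (Quotient s)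
      = ∑ q : Quotient s, ∑ x with Quotient.mk s x = q, (1 + 2 * if f x = x then 1 else 0) := by
        rw [Finset.sum_congr rfl fun q _ => weight q]
        simp [mul_comm]
    _ = ∑ x : α, (1 + 2 * if f x = x then 1 else 0) := Finset.sum_fiberwise _ _ _
    _ = _ := by
        rw [Finset.sum_add_distrib, ← Finset.mul_sum, Finset.sum_boole]
        simp

/-- A triple `(a, b, c)` with sum `N` is encoded by `i = a + b - 1 < N - 1` and `j = a - 1 < i`. -/
def tripleEquiv (N : ℕ) : {t // IsTriple N t} ≃ Σ i : Fin (N - 1), Fin i where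
  toFun t := ⟨⟨t.1.1 + t.1.2.1 - 1, by have := t.2; unfold IsTriple at this; omega⟩,
    ⟨t.1.1 - 1, by have := t.2; unfold IsTriple at this; dsimp only; omega⟩⟩
  invFun p := ⟨((p.2 : ℕ) + 1, (p.1 : ℕ) - (p.2 : ℕ), N - 1 - (p.1 : ℕ)), by
    have := p.1.2
    have := p.2.2
    unfold IsTriple
    dsimp only
    omega⟩
  left_inv := by
    rintro ⟨⟨a, b, c⟩, h⟩
    simp only [IsTriple] at h
    refine Subtype.ext (Prod.ext ?_ (Prod.ext ?_ ?_)) <;> dsimp only <;> omega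
  right_inv := by
    rintro ⟨⟨i, hi⟩, ⟨j, hj⟩⟩
    dsimp only at hj
    have e : j + 1 + (i - j) - 1 = i := by omega
    simp only [Sigma.mk.injEq, Fin.mk.injEq]
    refine ⟨e, ?_⟩
    rw [Fin.heq_ext_iff (by simpa using e)]
    simp

instance (N : ℕ) : Finite {t // IsTriple N t} := Finite.of_equiv _ (tripleEquiv N).symm

lemma two_mul_card_triple (N : ℕ) :
    Nat.card {t // IsTriple N t} * 2 = (N - 1) * (N - 2) := by
  rw [Nat.card_congr (tripleEquiv N), Nat.card_sigma]
  simp only [Nat.card_eq_fintype_card, Fintype.card_fin]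
  rw [← Finset.sum_range (fun i => i), Finset.sum_range_id_mul_two, Nat.sub_sub]

lemma IsTriple.rot {N : ℕ} {t : ℕ × ℕ × ℕ} (h : IsTriple N t) : IsTriple N (rot t) := by
  simp only [IsTriple, _root_.rot] at *
  omega

lemma isTriple_and_rot_eq_iff {N : ℕ} {t : ℕ × ℕ × ℕ} (hN : 1 ≤ N) :
    IsTriple N t ∧ rot t = t ↔ 3 ∣ N ∧ t = (N / 3, N / 3, N / 3) := by
  obtain ⟨a, b, c⟩ := t
  simp only [IsTriple, rot, Prod.mk.injEq]
  omega

/-- The rotation `rot2` restricted to pairs of triples with sums `m` and `N`. -/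
def pairRot (m N : ℕ) (p : {p : (ℕ × ℕ × ℕ) × (ℕ × ℕ × ℕ) // IsTriple m p.1 ∧ IsTriple N p.2}) :
    {p : (ℕ × ℕ × ℕ) × (ℕ × ℕ × ℕ) // IsTriple m p.1 ∧ IsTriple N p.2} :=
  ⟨rot2 p.1, p.2.1.rot, p.2.2.rot⟩

lemma card_fixed (m N : ℕ) (hm : 1 ≤ m) (hN : 1 ≤ N) :
    Nat.card {p // pairRot m N p = p} = if 3 ∣ m ∧ 3 ∣ N then 1 else 0 := by
  have key : ∀ p : {p // pairRot m N p = p},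
      (3 ∣ m ∧ p.1.1.1 = (m / 3, m / 3, m / 3)) ∧ (3 ∣ N ∧ p.1.1.2 = (N / 3, N / 3, N / 3)) := by
    rintro ⟨⟨⟨s, t⟩, hs, ht⟩, h⟩
    simp only [pairRot, rot2, Subtype.mk.injEq, Prod.mk.injEq] at h
    exact ⟨(isTriple_and_rot_eq_iff hm).1 ⟨hs, h.1⟩, (isTriple_and_rot_eq_iff hN).1 ⟨ht, h.2⟩⟩
  split_ifs with h
  · rw [Nat.card_eq_one_iff_unique]
    constructor
    · constructor
      intro p q
      exact Subtype.ext (Subtype.ext (Prod.ext ((key p).1.2.trans (key q).1.2.symm)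
        ((key p).2.2.trans (key q).2.2.symm)))
    · have h1 := (isTriple_and_rot_eq_iff hm).2 ⟨h.1, rfl⟩
      have h2 := (isTriple_and_rot_eq_iff hN).2 ⟨h.2, rfl⟩
      exact ⟨⟨⟨(_, _), h1.1, h2.1⟩, rfl⟩⟩
  · rw [Nat.card_eq_zero]
    exact Or.inl ⟨fun p => h ⟨(key p).1.1, (key p).2.1⟩⟩

/-- For `m ≥ 1`, `N ≥ 1`, the number `R(m,N)` of orbits of the simultaneous
cyclic rotation action `((x,y,z),(a,b,c)) ↦ ((z,x,y),(c,a,b))` on pairs of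
ordered triples of positive integers with `x+y+z = m`, `a+b+c = N` satisfies
`3·R(m,N) = (m-1)(m-2)(N-1)(N-2)/4 + 2·[3 ∣ m and 3 ∣ N]`. -/
theorem three_mul_card_pair_orbits (m N : ℕ) (hm : 1 ≤ m) (hN : 1 ≤ N) :
    3 * Nat.card
        (Quotient (pairRotSetoid fun p => IsTriple m p.1 ∧ IsTriple N p.2)) =
      (m - 1) * (m - 2) * ((N - 1) * (N - 2)) / 4 +
        2 * (if 3 ∣ m ∧ 3 ∣ N then 1 else 0) := by
  have e : {p : (ℕ × ℕ × ℕ) × (ℕ × ℕ × ℕ) // IsTriple m p.1 ∧ IsTriple N p.2} ≃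
      {t // IsTriple m t} × {t // IsTriple N t} := Equiv.subtypeProdEquivProd
  have : Finite {p : (ℕ × ℕ × ℕ) × (ℕ × ℕ × ℕ) // IsTriple m p.1 ∧ IsTriple N p.2} :=
    Finite.of_equiv _ e.symm
  rw [three_mul_card_quotient _ (pairRot m N) (fun _ => rfl)
    (fun x y => by simp only [Subtype.ext_iff]; rfl), card_fixed m N hm hN,
    Nat.card_congr e, Nat.card_prod, ← two_mul_card_triple m, ← two_mul_card_triple N]
  congr 1
  rw [mul_mul_mul_comm]
  exact (Nat.mul_div_cancel _ (by norm_num)).symm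
end

section
/- Fix a natural number n ≥ 1 and let f : ℕ → ℚ be a function such that for every natural number N ≥ 1, ∑_{d ∣ N} f(d) = (n(n+1)/12)·(N-1)(N-2) + (2/3)·ε(n,N), where ε(n,N) = 1 if 3 ∣ N and n ≡ 1 (mod 3) and ε(n,N) = 0 otherwise. Then f(1) = 0, and for every N ≥ 2, f(N) = (n(n+1)/12)·(Ψ(N) - 3φ(N)) + (2/3)·ε'(n,N), where ε'(n,N) = 1 if N = 3 and n ≡ 1 (mod 3) and ε'(n,N) = 0 otherwise. -/
/-!
The right-hand side of the hypothesis is a combination of `N²`, `N`, `1` and the indicator of `3 ∣ N`.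
These are the divisor sums of `Psi` (`sum_Psi`), of `φ` (`Nat.sum_totient`), of the indicator of `1`
and of the indicator of `3`. Hence the claimed formula, corrected at `N = 1` by the
multiple of the indicator of `1` that produces the constant term, has the same divisor sums as `f`,
and a function on the positive integers is determined by its divisor sums
(`eq_of_sum_divisors_eq`). At `N = 1` the correction `2` cancels `Psi 1 - 3 φ(1) = -2`.
-/

/-- `Psi d` is the two-dimensional analogue of Euler's totient function:
the number of pairs `(k₁,k₂)` with `0 ≤ k₁,k₂ < d` and `gcd(k₁,k₂,d) = 1`. -/
noncomputable def Psi (d : ℕ) : ℕ :=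
  Nat.card {p : ℕ × ℕ // p.1 < d ∧ p.2 < d ∧ Nat.gcd (Nat.gcd p.1 p.2) d = 1}

/-- The pairs counted by `Psi d`, as a finset. -/
def primitivePairs (d : ℕ) : Finset (ℕ × ℕ) :=
  (Finset.range d ×ˢ Finset.range d).filter fun p => Nat.gcd (Nat.gcd p.1 p.2) d = 1

lemma Psi_eq_card (d : ℕ) : Psi d = (primitivePairs d).card := by
  unfold Psi
  rw [← Nat.card_eq_finsetCard]
  refine Nat.card_congr (Equiv.subtypeEquivRight fun p => ?_)
  simp [primitivePairs, and_assoc]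

lemma Psi_one : Psi 1 = 1 := by
  rw [Psi_eq_card]
  decide

/-- The pairs in `[0, e * d)²` whose gcd with `e * d` is `e` are the multiples by `e` of the
primitive pairs modulo `d`. -/
lemma card_pairs_gcd_eq (e d : ℕ) (he : 0 < e) :
    ((Finset.range (e * d) ×ˢ Finset.range (e * d)).filter fun p =>
      Nat.gcd (Nat.gcd p.1 p.2) (e * d) = e).card = Psi d := by
  rw [Psi_eq_card]
  symm
  refine Finset.card_bij (fun p _ => (e * p.1, e * p.2)) ?_ ?_ ?_
  · rintro ⟨a, b⟩ h
    simp only [primitivePairs, Finset.mem_filter, Finset.mem_product, Finset.mem_range] at h ⊢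
    obtain ⟨⟨ha, hb⟩, hg⟩ := h
    refine ⟨⟨Nat.mul_lt_mul_of_pos_left ha he, Nat.mul_lt_mul_of_pos_left hb he⟩, ?_⟩
    rw [Nat.gcd_mul_left, Nat.gcd_mul_left, hg, mul_one]
  · rintro ⟨a, b⟩ _ ⟨a', b'⟩ _ h
    simpa [he.ne'] using h
  · rintro ⟨x, y⟩ h
    simp only [Finset.mem_filter, Finset.mem_product, Finset.mem_range] at h
    obtain ⟨⟨hx, hy⟩, hg⟩ := h
    have hdvd : e ∣ Nat.gcd x y := hg ▸ Nat.gcd_dvd_left (Nat.gcd x y) (e * d)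
    obtain ⟨a, rfl⟩ := hdvd.trans (Nat.gcd_dvd_left x y)
    obtain ⟨b, rfl⟩ := hdvd.trans (Nat.gcd_dvd_right _ y)
    refine ⟨(a, b), ?_, rfl⟩
    simp only [primitivePairs, Finset.mem_filter, Finset.mem_product, Finset.mem_range]
    refine ⟨⟨Nat.lt_of_mul_lt_mul_left hx, Nat.lt_of_mul_lt_mul_left hy⟩, ?_⟩
    rw [Nat.gcd_mul_left, Nat.gcd_mul_left] at hg
    exact Nat.eq_of_mul_eq_mul_left he (hg.trans (mul_one e).symm)

/-- Sorting the `N²` pairs by their gcd with `N`. -/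
lemma sum_Psi (N : ℕ) (hN : N ≠ 0) : ∑ d ∈ N.divisors, Psi d = N ^ 2 := by
  have hmaps : ∀ p ∈ Finset.range N ×ˢ Finset.range N,
      Nat.gcd (Nat.gcd p.1 p.2) N ∈ N.divisors := fun p _ =>
    Nat.mem_divisors.2 ⟨Nat.gcd_dvd_right _ _, hN⟩
  have hcard := Finset.card_eq_sum_card_fiberwise hmaps
  rw [Finset.card_product, Finset.card_range, ← sq] at hcard
  rw [hcard, ← Nat.sum_div_divisors N Psi]
  refine Finset.sum_congr rfl fun e he => ?_
  have hmul : e * (N / e) = N := Nat.mul_div_cancel' (Nat.dvd_of_mem_divisors he)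
  have h := card_pairs_gcd_eq e (N / e) (Nat.pos_of_mem_divisors he)
  rw [hmul] at h
  exact h.symm

lemma eq_of_sum_divisors_eq {f g : ℕ → ℚ}
    (h : ∀ N : ℕ, 1 ≤ N → ∑ d ∈ N.divisors, f d = ∑ d ∈ N.divisors, g d) :
    ∀ N : ℕ, 1 ≤ N → f N = g N := by
  intro N
  induction N using Nat.strong_induction_on with
  | _ N ih =>
    intro hN
    have hsum := h N hN
    rw [← Nat.cons_self_properDivisors (by omega : N ≠ 0), Finset.sum_cons, Finset.sum_cons,
      Finset.sum_congr rfl fun d hd => ih d (Nat.mem_properDivisors.1 hd).2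
        (Nat.pos_of_mem_properDivisors hd)] at hsum
    exact add_right_cancel hsum

/-- Fix `n ≥ 1` and let `f : ℕ → ℚ` satisfy, for every `N ≥ 1`,
`∑_{d ∣ N} f(d) = (n(n+1)/12)(N-1)(N-2) + (2/3)·ε(n,N)`, where `ε(n,N) = 1`
if `3 ∣ N` and `n ≡ 1 (mod 3)` and `0` otherwise.  Then `f(1) = 0`, and for
every `N ≥ 2`, `f(N) = (n(n+1)/12)(Ψ(N) - 3φ(N)) + (2/3)·ε'(n,N)`, where
`ε'(n,N) = 1` if `N = 3` and `n ≡ 1 (mod 3)` and `0` otherwise. -/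
theorem explicit_formula_from_divisor_sum (n : ℕ) (hn : 1 ≤ n) (f : ℕ → ℚ)
    (hf : ∀ N : ℕ, 1 ≤ N →
      ∑ d ∈ N.divisors, f d =
        (n : ℚ) * ((n : ℚ) + 1) / 12 * (((N : ℚ) - 1) * ((N : ℚ) - 2)) +
          2 / 3 * (if 3 ∣ N ∧ n % 3 = 1 then 1 else 0)) :
    f 1 = 0 ∧
      ∀ N : ℕ, 2 ≤ N →
        f N = (n : ℚ) * ((n : ℚ) + 1) / 12 *
            ((Psi N : ℚ) - 3 * (Nat.totient N : ℚ)) +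
          2 / 3 * (if N = 3 ∧ n % 3 = 1 then 1 else 0) := by
  have key : ∀ N : ℕ, 1 ≤ N → f N = (n : ℚ) * ((n : ℚ) + 1) / 12 *
      ((Psi N : ℚ) - 3 * (Nat.totient N : ℚ) + 2 * (if N = 1 then 1 else 0)) +
        2 / 3 * (if N = 3 ∧ n % 3 = 1 then 1 else 0) := by
    refine eq_of_sum_divisors_eq fun N hN => ?_
    have hN0 : N ≠ 0 := by omega
    have hPsi : ∑ d ∈ N.divisors, (Psi d : ℚ) = (N : ℚ) ^ 2 := by
      exact_mod_cast sum_Psi N hN0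
    have hphi : ∑ d ∈ N.divisors, (Nat.totient d : ℚ) = (N : ℚ) := by
      exact_mod_cast Nat.sum_totient N
    have hone : ∑ d ∈ N.divisors, (if d = 1 then (1 : ℚ) else 0) = 1 := by
      simp [Finset.sum_ite_eq', hN0]
    have hthree : ∑ d ∈ N.divisors, (if d = 3 ∧ n % 3 = 1 then (1 : ℚ) else 0) =
        if 3 ∣ N ∧ n % 3 = 1 then 1 else 0 := by
      by_cases hmod : n % 3 = 1 <;> simp [hmod, hN0]
    rw [hf N hN, Finset.sum_add_distrib, ← Finset.mul_sum, ← Finset.mul_sum,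
      Finset.sum_add_distrib, Finset.sum_sub_distrib, ← Finset.mul_sum, ← Finset.mul_sum,
      hPsi, hphi, hone, hthree]
    ring
  refine ⟨?_, fun N hN => ?_⟩
  · rw [key 1 le_rfl, Psi_one]
    norm_num
  · rw [key N (by omega), if_neg (by omega : ¬ N = 1)]
    ring
end

section
/- For every natural number N ≥ 2, the number of ordered triples (a,b,c) of positive integers with a + b + c = N and gcd(a,b,c) = 1 equals (Ψ(N) - 3φ(N))/2, where φ is Euler's totient function and Ψ(N) = #{(k₁,k₂) ∈ ℤ² : 0 ≤ k₁,k₂ < N, gcd(k₁,k₂,N) = 1}. -/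
open Finset

/-- The pairs in `[0, N)²` counted by `Psi N`. -/
def primPairs (N : ℕ) : Finset (ℕ × ℕ) :=
  (range N ×ˢ range N).filter fun p => Nat.gcd (Nat.gcd p.1 p.2) N = 1

/-- The primitive pairs in the open triangle `x, y > 0`, `x + y < N`. -/
def lowerPairs (N : ℕ) : Finset (ℕ × ℕ) :=
  (primPairs N).filter fun p => 0 < p.1 ∧ 0 < p.2 ∧ p.1 + p.2 < N

lemma mem_primPairs {N : ℕ} {p : ℕ × ℕ} :
    p ∈ primPairs N ↔ p.1 < N ∧ p.2 < N ∧ Nat.gcd (Nat.gcd p.1 p.2) N = 1 := by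
  simp [primPairs, and_assoc]

lemma psi_eq_card (N : ℕ) : Psi N = #(primPairs N) := by
  unfold Psi
  rw [← Nat.card_eq_finsetCard]
  exact Nat.card_congr (Equiv.subtypeEquivRight fun p => mem_primPairs.symm)

lemma gcd_reflect_dvd (N x y : ℕ) :
    Nat.gcd (Nat.gcd x y) N ∣ Nat.gcd (Nat.gcd (N - x) (N - y)) N := by
  have h := Nat.gcd_dvd_right (Nat.gcd x y) N
  have h' := Nat.gcd_dvd_left (Nat.gcd x y) N
  exact Nat.dvd_gcd (Nat.dvd_gcd (Nat.dvd_sub h (h'.trans (Nat.gcd_dvd_left _ _)))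
    (Nat.dvd_sub h (h'.trans (Nat.gcd_dvd_right _ _)))) h

lemma gcd_reflect {N x y : ℕ} (hx : x ≤ N) (hy : y ≤ N) :
    Nat.gcd (Nat.gcd (N - x) (N - y)) N = Nat.gcd (Nat.gcd x y) N := by
  refine Nat.dvd_antisymm ?_ (gcd_reflect_dvd N x y)
  have := gcd_reflect_dvd N (N - x) (N - y)
  rwa [Nat.sub_sub_self hx, Nat.sub_sub_self hy] at this

lemma gcd_add_third (a b c : ℕ) :
    Nat.gcd (Nat.gcd a b) (a + b + c) = Nat.gcd (Nat.gcd a b) c := by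
  rw [add_comm]
  exact Nat.gcd_add_right_right_of_dvd c
    (Nat.dvd_add (Nat.gcd_dvd_left a b) (Nat.gcd_dvd_right a b))

lemma gcd_of_add_eq {N x y : ℕ} (h : x + y = N) :
    Nat.gcd (Nat.gcd x y) N = Nat.gcd N x := by
  subst h
  have := gcd_add_third x y 0
  simp only [add_zero, Nat.gcd_zero_right] at this
  rw [this, Nat.gcd_comm (x + y), Nat.gcd_self_add_right]

lemma card_triples (N : ℕ) :
    Nat.card {t : ℕ × ℕ × ℕ // IsTriple N t ∧ Nat.gcd (Nat.gcd t.1 t.2.1) t.2.2 = 1}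
      = #(lowerPairs N) := by
  rw [← Nat.card_eq_finsetCard]
  refine Nat.card_congr
    { toFun := fun t => ⟨(t.1.1, t.1.2.1), ?_⟩
      invFun := fun p => ⟨(p.1.1, p.1.2, N - p.1.1 - p.1.2), ?_⟩
      left_inv := ?_
      right_inv := ?_ }
  · obtain ⟨⟨a, b, c⟩, ⟨ha, hb, hc, rfl⟩, hg⟩ := t
    dsimp only at ha hb hc hg
    simp only [lowerPairs, mem_filter, mem_primPairs]
    rw [gcd_add_third]
    refine ⟨⟨?_, ?_, hg⟩, ha, hb, ?_⟩ <;> omega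
  · obtain ⟨⟨x, y⟩, hp⟩ := p
    simp only [lowerPairs, mem_filter, mem_primPairs] at hp
    obtain ⟨⟨_, _, hg⟩, hx, hy, hs⟩ := hp
    refine ⟨⟨hx, hy, ?_, ?_⟩, ?_⟩
    · dsimp only; omega
    · dsimp only; omega
    · have := gcd_add_third x y (N - x - y)
      rw [show x + y + (N - x - y) = N by omega] at this
      dsimp only
      rw [← this, hg]
  · rintro ⟨⟨a, b, c⟩, ⟨ha, hb, hc, h⟩, hg⟩
    dsimp only at ha hb hc h
    simp only [Subtype.mk.injEq, Prod.mk.injEq, true_and]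
    omega
  · rintro ⟨⟨x, y⟩, hp⟩
    rfl

lemma card_upper (N : ℕ) :
    #((primPairs N).filter fun p => N < p.1 + p.2) = #(lowerPairs N) := by
  refine card_nbij' (fun p => (N - p.1, N - p.2)) (fun p => (N - p.1, N - p.2)) ?_ ?_ ?_ ?_
  · rintro ⟨x, y⟩ h
    simp only [lowerPairs, coe_filter, Set.mem_ofPred_eq, mem_primPairs] at *
    rw [gcd_reflect (by omega) (by omega)]
    refine ⟨⟨?_, ?_, h.1.2.2⟩, ?_, ?_, ?_⟩ <;> omega
  · rintro ⟨x, y⟩ h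
    simp only [lowerPairs, coe_filter, Set.mem_ofPred_eq, mem_primPairs] at *
    rw [gcd_reflect (by omega) (by omega)]
    refine ⟨⟨?_, ?_, h.1.2.2⟩, ?_⟩ <;> omega
  · rintro ⟨x, y⟩ h
    simp only [coe_filter, Set.mem_ofPred_eq, mem_primPairs, Prod.mk.injEq] at *
    omega
  · rintro ⟨x, y⟩ h
    simp only [lowerPairs, coe_filter, Set.mem_ofPred_eq, mem_primPairs,
      Prod.mk.injEq] at *
    omega

lemma pos_of_gcd {N x : ℕ} (hN : 2 ≤ N) (h : Nat.gcd N x = 1) : 0 < x := by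
  rcases Nat.eq_zero_or_pos x with rfl | hx
  · rw [Nat.gcd_zero_right] at h; omega
  · exact hx

lemma card_left {N : ℕ} (hN : 2 ≤ N) :
    #((primPairs N).filter fun p => p.1 = 0) = N.totient := by
  rw [Nat.totient_eq_card_coprime]
  refine card_nbij' (fun p => p.2) (fun y => (0, y)) ?_ ?_ ?_ ?_
  · rintro ⟨x, y⟩ h
    simp only [coe_filter, Set.mem_ofPred_eq, mem_primPairs, mem_range, Nat.Coprime] at *
    obtain ⟨⟨_, hy, hg⟩, rfl⟩ := h
    rw [Nat.gcd_zero_left, Nat.gcd_comm] at hg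
    exact ⟨hy, hg⟩
  · intro y h
    simp only [coe_filter, Set.mem_ofPred_eq, mem_primPairs, mem_range, Nat.Coprime] at *
    rw [Nat.gcd_zero_left, Nat.gcd_comm]
    exact ⟨⟨by omega, h.1, h.2⟩, trivial⟩
  · rintro ⟨x, y⟩ h
    simp only [coe_filter, Set.mem_ofPred_eq] at h
    simp [h.2]
  · intro y h
    rfl

lemma card_bottom {N : ℕ} (hN : 2 ≤ N) :
    #((primPairs N).filter fun p => p.2 = 0) = N.totient := by
  rw [← card_left hN]
  refine card_nbij' Prod.swap Prod.swap ?_ ?_ (fun _ _ => rfl) (fun _ _ => rfl) <;>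
  · rintro ⟨x, y⟩ h
    simp only [coe_filter, Set.mem_ofPred_eq, mem_primPairs, Prod.swap] at *
    rw [Nat.gcd_comm y x]
    tauto

lemma card_diagonal {N : ℕ} (hN : 2 ≤ N) :
    #((primPairs N).filter fun p => p.1 + p.2 = N) = N.totient := by
  rw [Nat.totient_eq_card_coprime]
  refine card_nbij' (fun p => p.1) (fun x => (x, N - x)) ?_ ?_ ?_ ?_
  · rintro ⟨x, y⟩ h
    simp only [coe_filter, Set.mem_ofPred_eq, mem_primPairs, mem_range, Nat.Coprime] at *
    obtain ⟨⟨hx, hy, hg⟩, hs⟩ := h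
    rw [gcd_of_add_eq hs] at hg
    exact ⟨hx, hg⟩
  · intro x h
    simp only [coe_filter, Set.mem_ofPred_eq, mem_primPairs, mem_range, Nat.Coprime] at *
    have hx := pos_of_gcd hN h.2
    rw [gcd_of_add_eq (by omega)]
    refine ⟨⟨h.1, ?_, h.2⟩, ?_⟩ <;> omega
  · rintro ⟨x, y⟩ h
    simp only [coe_filter, Set.mem_ofPred_eq] at h
    simp only [Prod.mk.injEq, true_and]
    omega
  · intro x h
    rfl

lemma card_primPairs {N : ℕ} (hN : 2 ≤ N) :
    #(primPairs N) = 3 * N.totient + 2 * #(lowerPairs N) := by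
  have key : #(primPairs N) =
      #((primPairs N).filter fun p => p.1 = 0) + #((primPairs N).filter fun p => p.2 = 0)
      + #((primPairs N).filter fun p => p.1 + p.2 = N)
      + #((primPairs N).filter fun p => N < p.1 + p.2) + #(lowerPairs N) := by
    unfold lowerPairs
    simp only [card_filter, ← sum_add_distrib]
    rw [card_eq_sum_ones]
    refine sum_congr rfl ?_
    rintro ⟨x, y⟩ h
    rw [mem_primPairs] at h
    obtain ⟨hx, hy, hg⟩ := h
    -- The origin would be counted by both axes; it is excluded since its gcd is `N ≠ 1`.
    have h0 : ¬ (x = 0 ∧ y = 0) := by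
      rintro ⟨rfl, rfl⟩
      simp at hg
      omega
    dsimp only at *
    split_ifs <;> omega
  rw [key, card_left hN, card_bottom hN, card_diagonal hN, card_upper]
  ring

/-- For every `N ≥ 2`, the number of ordered triples `(a,b,c)` of positive
integers with `a + b + c = N` and `gcd(a,b,c) = 1` equals `(Ψ(N) - 3φ(N))/2`. -/
theorem card_primitive_triples (N : ℕ) (hN : 2 ≤ N) :
    (Nat.card {t : ℕ × ℕ × ℕ //
        IsTriple N t ∧ Nat.gcd (Nat.gcd t.1 t.2.1) t.2.2 = 1} : ℚ) =
      ((Psi N : ℚ) - 3 * (Nat.totient N : ℚ)) / 2 := by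
  rw [card_triples, psi_eq_card, card_primPairs hN]
  push_cast
  ring
end

section
/- For every natural number N ≥ 2, if r'(N) denotes the number of orbits of the cyclic rotation action (a,b,c) ↦ (c,a,b) on the set of ordered triples (a,b,c) of positive integers with a + b + c = N and gcd(a,b,c) = 1, then 3·r'(N) = (Ψ(N) - 3φ(N))/2 + 2·[N = 3], where the bracket is 1 if N = 3 and 0 otherwise. -/
lemma rot_rot_rot (t : ℕ × ℕ × ℕ) : rot (rot (rot t)) = t := rfl

/-- The setoid whose classes are the orbits of the cyclic rotation action of the
cyclic group of order `3` on the set of triples satisfying `P`. -/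
def rotSetoid (P : ℕ × ℕ × ℕ → Prop) : Setoid {t : ℕ × ℕ × ℕ // P t} where
  r x y := y.1 = x.1 ∨ y.1 = rot x.1 ∨ y.1 = rot (rot x.1)
  iseqv := by
    constructor
    · intro x; exact Or.inl rfl
    · rintro x y (h | h | h)
      · exact Or.inl h.symm
      · right; right; rw [h, rot_rot_rot]
      · right; left; rw [h, rot_rot_rot]
    · rintro x y z (h1 | h1 | h1) (h2 | h2 | h2) <;>
        rw [h2, h1] <;> simp [rot_rot_rot]

/-- The pairs counted by `Psi N`, as a finset. -/
def psiPairs (N : ℕ) : Finset (ℕ × ℕ) :=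
  (Finset.range N ×ˢ Finset.range N).filter fun p => Nat.gcd (Nat.gcd p.1 p.2) N = 1

lemma mem_psiPairs {N : ℕ} {p : ℕ × ℕ} :
    p ∈ psiPairs N ↔ p.1 < N ∧ p.2 < N ∧ Nat.gcd (Nat.gcd p.1 p.2) N = 1 := by
  simp [psiPairs, and_assoc]

lemma psi_eq_card_psiPairs (N : ℕ) : Psi N = (psiPairs N).card := by
  rw [Psi, ← Nat.card_eq_finsetCard]
  exact Nat.card_congr (Equiv.subtypeEquivRight fun p => mem_psiPairs.symm)

lemma gcd_reflect_s12 {N a b : ℕ} (ha : a ≤ N) (hb : b ≤ N) :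
    Nat.gcd (Nat.gcd (N - a) (N - b)) N = Nat.gcd (Nat.gcd a b) N := by
  rw [Nat.gcd_assoc, Nat.gcd_self_sub_left hb, Nat.gcd_comm b N, ← Nat.gcd_assoc,
    Nat.gcd_self_sub_left ha, Nat.gcd_assoc, Nat.gcd_comm N b, ← Nat.gcd_assoc]

/-- For `a + b + c = N`, being coprime as a triple is being coprime as a pair modulo `N`. -/
lemma gcd_triple {a b c N : ℕ} (h : a + b + c = N) :
    Nat.gcd (Nat.gcd a b) c = Nat.gcd (Nat.gcd a b) N := by
  obtain ⟨k, hk⟩ : Nat.gcd a b ∣ a + b :=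
    dvd_add (Nat.gcd_dvd_left a b) (Nat.gcd_dvd_right a b)
  rw [← h, hk]
  simp

/-- The pairs of positive entries with sum below `N`: the first two entries of the primitive
triples. -/
def lowPairs (N : ℕ) : Finset (ℕ × ℕ) :=
  (psiPairs N).filter fun p => 0 < p.1 ∧ 0 < p.2 ∧ p.1 + p.2 < N

/-- The primitive triples of sum `N`, the set on which rotation acts. -/
abbrev PrimTriple (N : ℕ) : Type :=
  {t : ℕ × ℕ × ℕ // IsTriple N t ∧ Nat.gcd (Nat.gcd t.1 t.2.1) t.2.2 = 1}

/-- A primitive triple is determined by its first two entries. -/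
def primTripleEquiv (N : ℕ) : PrimTriple N ≃ lowPairs N where
  toFun t := ⟨(t.1.1, t.1.2.1), by
    obtain ⟨⟨a, b, c⟩, ⟨ha, hb, hc, hs⟩, hg⟩ := t
    simp only at ha hb hc hs hg
    rw [gcd_triple hs] at hg
    simp only [lowPairs, Finset.mem_filter, mem_psiPairs]
    refine ⟨⟨?_, ?_, hg⟩, ha, hb, ?_⟩ <;> omega⟩
  invFun p := ⟨(p.1.1, p.1.2, N - p.1.1 - p.1.2), by
    obtain ⟨⟨a, b⟩, h⟩ := p
    simp only [lowPairs, Finset.mem_filter, mem_psiPairs] at h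
    obtain ⟨⟨-, -, hg⟩, ha, hb, hs⟩ := h
    have h' : a + b + (N - a - b) = N := by omega
    refine ⟨⟨ha, hb, ?_, h'⟩, ?_⟩
    · simp only
      omega
    · simp only
      rw [gcd_triple h', hg]⟩
  left_inv t := by
    obtain ⟨⟨a, b, c⟩, ⟨ha, hb, hc, hs⟩, hg⟩ := t
    simp only at ha hb hc hs
    simp only [Subtype.mk.injEq, Prod.mk.injEq, true_and]
    omega
  right_inv p := rfl

instance (N : ℕ) : Finite (PrimTriple N) := Finite.of_equiv _ (primTripleEquiv N).symm

lemma card_primTriple (N : ℕ) : Nat.card (PrimTriple N) = (lowPairs N).card := by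
  rw [Nat.card_congr (primTripleEquiv N), Nat.card_eq_finsetCard]

lemma card_fst_zero (N : ℕ) :
    ((psiPairs N).filter fun p => p.1 = 0).card = N.totient := by
  rw [Nat.totient_eq_card_coprime]
  refine Finset.card_nbij' (fun p => p.2) (fun k => (0, k)) ?_ ?_ ?_ ?_
  · rintro ⟨a, b⟩ h
    simp only [Finset.coe_filter, Set.mem_ofPred_eq, mem_psiPairs] at h
    obtain ⟨⟨-, hb, hg⟩, rfl⟩ := h
    simp only [Finset.coe_filter, Set.mem_ofPred_eq, Finset.mem_range]
    exact ⟨hb, by simpa [Nat.coprime_comm, Nat.Coprime] using hg⟩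
  · intro k h
    simp only [Finset.coe_filter, Set.mem_ofPred_eq, Finset.mem_range] at h
    simp only [Finset.coe_filter, Set.mem_ofPred_eq, mem_psiPairs]
    refine ⟨⟨by omega, h.1, ?_⟩, trivial⟩
    rw [Nat.gcd_zero_left]
    exact h.2.symm
  · rintro ⟨a, b⟩ h
    simp only [Finset.coe_filter, Set.mem_ofPred_eq] at h
    simp [h.2]
  · intro k _
    rfl

lemma card_snd_zero (N : ℕ) (hN : 2 ≤ N) :
    ((psiPairs N).filter fun p => p.1 ≠ 0 ∧ p.2 = 0).card = N.totient := by
  rw [Nat.totient_eq_card_coprime]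
  refine Finset.card_nbij' (fun p => p.1) (fun k => (k, 0)) ?_ ?_ ?_ ?_
  · rintro ⟨a, b⟩ h
    simp only [Finset.coe_filter, Set.mem_ofPred_eq, mem_psiPairs] at h
    obtain ⟨⟨ha, -, hg⟩, -, rfl⟩ := h
    simp only [Finset.coe_filter, Set.mem_ofPred_eq, Finset.mem_range]
    rw [Nat.gcd_zero_right] at hg
    exact ⟨ha, Nat.Coprime.symm hg⟩
  · intro k h
    simp only [Finset.coe_filter, Set.mem_ofPred_eq, Finset.mem_range] at h
    simp only [Finset.coe_filter, Set.mem_ofPred_eq, mem_psiPairs]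
    refine ⟨⟨h.1, by omega, ?_⟩, ?_, trivial⟩
    · rw [Nat.gcd_zero_right]
      exact h.2.symm
    · rintro rfl
      have := h.2
      simp at this
      omega
  · rintro ⟨a, b⟩ h
    simp only [Finset.coe_filter, Set.mem_ofPred_eq] at h
    simp [h.2.2]
  · intro k _
    rfl

lemma card_sum_eq (N : ℕ) (hN : 2 ≤ N) :
    ((psiPairs N).filter fun p => p.1 ≠ 0 ∧ p.2 ≠ 0 ∧ p.1 + p.2 = N).card = N.totient := by
  rw [Nat.totient_eq_card_coprime]
  -- `gcd (k, N - k, N) = gcd (k, N)`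
  have key : ∀ a b : ℕ, a + b = N → Nat.gcd (Nat.gcd a b) N = Nat.gcd N a := by
    rintro a b rfl
    rw [Nat.gcd_eq_left (dvd_add (Nat.gcd_dvd_left a b) (Nat.gcd_dvd_right a b))]
    simp [Nat.gcd_comm]
  refine Finset.card_nbij' (fun p => p.1) (fun k => (k, N - k)) ?_ ?_ ?_ ?_
  · rintro ⟨a, b⟩ h
    simp only [Finset.coe_filter, Set.mem_ofPred_eq, mem_psiPairs] at h
    obtain ⟨⟨ha, -, hg⟩, -, -, hs⟩ := h
    simp only [Finset.coe_filter, Set.mem_ofPred_eq, Finset.mem_range]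
    rw [key a b hs] at hg
    exact ⟨ha, hg⟩
  · intro k h
    simp only [Finset.coe_filter, Set.mem_ofPred_eq, Finset.mem_range] at h
    simp only [Finset.coe_filter, Set.mem_ofPred_eq, mem_psiPairs]
    have hk : k ≠ 0 := by
      rintro rfl
      have := h.2
      simp at this
      omega
    refine ⟨⟨h.1, by omega, ?_⟩, hk, by omega, by omega⟩
    rw [key k (N - k) (by omega)]
    exact h.2
  · rintro ⟨a, b⟩ h
    simp only [Finset.coe_filter, Set.mem_ofPred_eq] at h
    simp only [Prod.mk.injEq, true_and]
    omega
  · intro k _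
    rfl

lemma card_high (N : ℕ) :
    ((psiPairs N).filter fun p => p.1 ≠ 0 ∧ p.2 ≠ 0 ∧ N < p.1 + p.2).card =
      (lowPairs N).card := by
  refine Finset.card_nbij' (fun p => (N - p.1, N - p.2)) (fun p => (N - p.1, N - p.2)) ?_ ?_ ?_ ?_
  all_goals
    rintro ⟨a, b⟩ h
    simp only [lowPairs, Finset.coe_filter, Set.mem_ofPred_eq, mem_psiPairs] at h
    obtain ⟨⟨ha, hb, hg⟩, h1, h2, h3⟩ := h
  · simp only [lowPairs, Finset.coe_filter, Set.mem_ofPred_eq, mem_psiPairs]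
    rw [gcd_reflect_s12 ha.le hb.le]
    refine ⟨⟨?_, ?_, hg⟩, ?_, ?_, ?_⟩ <;> omega
  · simp only [Finset.coe_filter, Set.mem_ofPred_eq, mem_psiPairs]
    rw [gcd_reflect_s12 ha.le hb.le]
    refine ⟨⟨?_, ?_, hg⟩, ?_, ?_, ?_⟩ <;> omega
  · simp only [Prod.mk.injEq]
    omega
  · simp only [Prod.mk.injEq]
    omega

lemma psi_eq (N : ℕ) (hN : 2 ≤ N) :
    Psi N = 3 * N.totient + 2 * Nat.card (PrimTriple N) := by
  have h1 := card_fst_zero N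
  have h2 := card_snd_zero N hN
  have h3 := card_sum_eq N hN
  have h4 := card_high N
  have h5 : (psiPairs N).card =
      ((psiPairs N).filter fun p => p.1 = 0).card +
      ((psiPairs N).filter fun p => p.1 ≠ 0 ∧ p.2 = 0).card +
      ((psiPairs N).filter fun p => p.1 ≠ 0 ∧ p.2 ≠ 0 ∧ p.1 + p.2 = N).card +
      ((psiPairs N).filter fun p => p.1 ≠ 0 ∧ p.2 ≠ 0 ∧ N < p.1 + p.2).card +
      (lowPairs N).card := by
    rw [Finset.card_eq_sum_ones]
    simp only [lowPairs, Finset.card_filter, ← Finset.sum_add_distrib]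
    refine Finset.sum_congr rfl fun p _ => ?_
    split_ifs <;> omega
  rw [psi_eq_card_psiPairs, card_primTriple]
  omega

/-- The orbits of rotation on primitive triples. -/
abbrev Orbits (N : ℕ) : Type :=
  Quotient (rotSetoid fun t => IsTriple N t ∧ Nat.gcd (Nat.gcd t.1 t.2.1) t.2.2 = 1)

/-- Rotation as a self-map of the primitive triples. -/
def rotPrim {N : ℕ} (x : PrimTriple N) : PrimTriple N := ⟨rot x.1, by
  obtain ⟨⟨a, b, c⟩, ⟨ha, hb, hc, hs⟩, hg⟩ := x
  simp only at ha hb hc hs hg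
  refine ⟨⟨hc, ha, hb, ?_⟩, ?_⟩
  · simp only [rot]
    omega
  · simp only [rot]
    rw [Nat.gcd_assoc, Nat.gcd_comm, hg]⟩

/-- A fixed triple is constant, so by primitivity it is `(1, 1, 1)`. -/
lemma eq_of_rotPrim_eq {N : ℕ} {x : PrimTriple N} (h : rotPrim x = x) : N = 3 := by
  obtain ⟨⟨a, b, c⟩, ⟨ha, hb, hc, hs⟩, hg⟩ := x
  simp only [rotPrim, rot, Subtype.mk.injEq, Prod.mk.injEq] at h
  obtain ⟨rfl, rfl, -⟩ := h
  simp only [Nat.gcd_self] at hg hs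
  omega

lemma card_eq_three_mul_orbits (N : ℕ) (hN : N ≠ 3) :
    Nat.card (PrimTriple N) = 3 * Nat.card (Orbits N) := by
  classical
  have := Fintype.ofFinite (PrimTriple N)
  have := Fintype.ofFinite (Orbits N)
  rw [Nat.card_eq_fintype_card, Nat.card_eq_fintype_card, ← Finset.card_univ,
    ← Finset.card_univ (α := Orbits N),
    Finset.card_eq_sum_card_fiberwise (f := fun x : PrimTriple N => (Quotient.mk _ x : Orbits N))
      (t := Finset.univ) (by simp)]
  have key : ∀ q : Orbits N,
      ({x ∈ (Finset.univ : Finset (PrimTriple N)) | (Quotient.mk _ x : Orbits N) = q}).card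
        = 3 := by
    intro q
    obtain ⟨x, rfl⟩ := Quotient.exists_rep q
    have h0 : ∀ y : PrimTriple N, rotPrim y ≠ y := fun y h => hN (eq_of_rotPrim_eq h)
    rw [Finset.card_eq_three]
    refine ⟨x, rotPrim x, rotPrim (rotPrim x), (h0 x).symm, fun h => h0 x ?_,
      (h0 (rotPrim x)).symm, ?_⟩
    · -- if `rot² x = x` then `rot x = rot³ x = x`
      have h' := congrArg rotPrim h
      exact h'.trans rfl
    · ext y
      simp only [Finset.mem_filter, Finset.mem_univ, true_and, Finset.mem_insert,
        Finset.mem_singleton]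
      rw [eq_comm, Quotient.eq]
      simp only [Subtype.ext_iff]
      exact Iff.rfl
  simp only [key, Finset.sum_const, smul_eq_mul]
  ring

lemma card_primTriple_three : Nat.card (PrimTriple 3) = 1 := by
  rw [card_primTriple]
  decide

lemma card_orbits_three : Nat.card (Orbits 3) = 1 := by
  obtain ⟨h, ⟨x⟩⟩ := Nat.card_eq_one_iff_unique.mp card_primTriple_three
  refine Nat.card_eq_one_iff_unique.mpr ⟨⟨?_⟩, ⟨Quotient.mk _ x⟩⟩
  intro p q
  obtain ⟨y, rfl⟩ := Quotient.exists_rep p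
  obtain ⟨z, rfl⟩ := Quotient.exists_rep q
  rw [h.elim y z]

/-- For every `N ≥ 2`, the number `r'(N)` of orbits of the cyclic rotation
action `(a,b,c) ↦ (c,a,b)` on ordered triples of positive integers with
`a + b + c = N` and `gcd(a,b,c) = 1` satisfies
`3·r'(N) = (Ψ(N) - 3φ(N))/2 + 2·[N = 3]`. -/
theorem three_mul_card_primitive_orbits (N : ℕ) (hN : 2 ≤ N) :
    (3 * Nat.card (Quotient (rotSetoid fun t =>
        IsTriple N t ∧ Nat.gcd (Nat.gcd t.1 t.2.1) t.2.2 = 1)) : ℚ) =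
      ((Psi N : ℚ) - 3 * (Nat.totient N : ℚ)) / 2 +
        2 * (if N = 3 then 1 else 0) := by
  change (3 * (Nat.card (Orbits N) : ℚ)) = _
  rw [psi_eq N hN]
  split_ifs with h
  · subst h
    rw [card_orbits_three, card_primTriple_three]
    push_cast
    ring
  · rw [card_eq_three_mul_orbits N h]
    push_cast
    ring
end
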